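/- Let f_1,…,f_n : ℝ^{d×r} → ℝ be differentiable, each with L-Lipschitz Euclidean gradient and ‖∇f_i(x)‖ ≤ L_f for all x ∈ St(d,r); set L_g := L + 2L_f and f := (1/n)∑_i f_i. Then for any x_1,…,x_n ∈ St(d,r) and any x̄ ∈ St(d,r): ‖grad f(x̄)‖² ≤ 2·‖(1/n)∑_{i=1}^n grad f_i(x_i)‖² + (2L_g²/n)·∑_{i=1}^n ‖x̄ − x_i‖². -/

import Mathlib

open scoped RealInnerProductSpace

attribute [local instance] Matrix.frobeniusNormedAddCommGroup Matrix.frobeniusNormedSpace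

/-- The Stiefel manifold `St(d,r) = {x ∈ ℝ^{d×r} : xᵀx = I_r}`, viewed as a subset of the
`d × r` real matrices equipped with the Frobenius norm. -/
def Stiefel (d r : ℕ) : Set (Matrix (Fin d) (Fin r) ℝ) :=
  {x | x.transpose * x = 1}

/-- Orthogonal projection onto the tangent space of the Stiefel manifold at `x`:
`P_{T_x}(v) = v - (1/2)·x·(xᵀv + vᵀx)`. -/
noncomputable def Tproj {d r : ℕ} (x v : Matrix (Fin d) (Fin r) ℝ) :
    Matrix (Fin d) (Fin r) ℝ :=
  v - (1 / 2 : ℝ) • (x * (x.transpose * v + v.transpose * x))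

/-- `p` is a nearest-point projection of `z` onto the set `S` (w.r.t. the Frobenius norm). -/
def IsNearestPoint {d r : ℕ} (S : Set (Matrix (Fin d) (Fin r) ℝ))
    (z p : Matrix (Fin d) (Fin r) ℝ) : Prop :=
  p ∈ S ∧ ∀ q ∈ S, ‖z - p‖ ≤ ‖z - q‖

/-- The second largest singular value of a real symmetric matrix `W`: the singular values are
the absolute values of the eigenvalues, and the second largest element (with multiplicity) of
the family `i ↦ |λ_i|` is `sup_{i ≠ j} min |λ_i| |λ_j|`. -/
noncomputable def sigma2 {n : ℕ} (W : Matrix (Fin n) (Fin n) ℝ) (hW : W.IsHermitian) : ℝ :=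
  ⨆ p : {p : Fin n × Fin n // p.1 ≠ p.2}, min |hW.eigenvalues p.1.1| |hW.eigenvalues p.1.2|

lemma frob_sq {m k : ℕ} (A : Matrix (Fin m) (Fin k) ℝ) :
    ‖A‖ ^ 2 = Matrix.trace (A.transpose * A) := by
  rw [Matrix.frobenius_norm_def, ← Real.sqrt_eq_rpow, Real.sq_sqrt (by positivity)]
  simp only [Matrix.trace, Matrix.diag, Matrix.mul_apply, Matrix.transpose_apply]
  rw [Finset.sum_comm]
  refine Finset.sum_congr rfl fun i _ => Finset.sum_congr rfl fun j _ => ?_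
  rw [Real.rpow_two, Real.norm_eq_abs, sq_abs, sq]

lemma stiefel_mul_norm {d r k : ℕ} {x : Matrix (Fin d) (Fin r) ℝ} (hx : x ∈ Stiefel d r)
    (B : Matrix (Fin r) (Fin k) ℝ) : ‖x * B‖ = ‖B‖ := by
  have hx' : x.transpose * x = 1 := hx
  have h : ‖x * B‖ ^ 2 = ‖B‖ ^ 2 := by
    rw [frob_sq, frob_sq, Matrix.transpose_mul, Matrix.mul_assoc, ← Matrix.mul_assoc x.transpose,
      hx', Matrix.one_mul]
  exact (sq_eq_sq₀ (norm_nonneg _) (norm_nonneg _)).1 h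

lemma stiefel_transpose_mul_norm {d r k : ℕ} {x : Matrix (Fin d) (Fin r) ℝ}
    (hx : x ∈ Stiefel d r) (g : Matrix (Fin d) (Fin k) ℝ) : ‖x.transpose * g‖ ≤ ‖g‖ := by
  have hx' : x.transpose * x = 1 := hx
  have h : ‖g - x * (x.transpose * g)‖ ^ 2 = ‖g‖ ^ 2 - ‖x.transpose * g‖ ^ 2 := by
    rw [frob_sq, frob_sq, frob_sq, ← Matrix.trace_sub]
    congr 1
    simp only [Matrix.transpose_sub, Matrix.transpose_mul, Matrix.transpose_transpose,
      Matrix.sub_mul, Matrix.mul_sub, Matrix.mul_assoc]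
    rw [← Matrix.mul_assoc x.transpose x, hx', Matrix.one_mul]
    abel
  have := sq_nonneg ‖g - x * (x.transpose * g)‖
  exact (sq_le_sq₀ (norm_nonneg _) (norm_nonneg _)).1 (by linarith)

lemma tproj_norm_le {d r : ℕ} {x : Matrix (Fin d) (Fin r) ℝ} (hx : x ∈ Stiefel d r)
    (v : Matrix (Fin d) (Fin r) ℝ) : ‖Tproj x v‖ ≤ ‖v‖ := by
  have hx' : x.transpose * x = 1 := hx
  set S := x.transpose * v + v.transpose * x with hS
  have hSt : S.transpose = S := by
    simp [hS, Matrix.transpose_add, Matrix.transpose_mul, add_comm]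
  have e1 : Matrix.trace (v.transpose * (x * S)) = Matrix.trace (S * (x.transpose * v)) := by
    rw [← Matrix.trace_transpose]
    simp [Matrix.transpose_mul, hSt, Matrix.mul_assoc]
  have e2 : Matrix.trace (S * S) = 2 * Matrix.trace (S * (x.transpose * v)) := by
    conv_lhs => rw [hS, Matrix.add_mul, Matrix.trace_add, ← hS]
    rw [Matrix.mul_assoc v.transpose, e1, Matrix.trace_mul_comm (x.transpose * v) S]
    ring
  have h : ‖Tproj x v‖ ^ 2 = ‖v‖ ^ 2 - 1 / 4 * ‖S‖ ^ 2 := by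
    rw [frob_sq, frob_sq, frob_sq, Tproj, ← hS, hSt]
    have : (v - (1 / 2 : ℝ) • (x * S)).transpose * (v - (1 / 2 : ℝ) • (x * S))
        = v.transpose * v - (1 / 2 : ℝ) • (v.transpose * (x * S))
          - (1 / 2 : ℝ) • (S * (x.transpose * v)) + (1 / 4 : ℝ) • (S * S) := by
      have h3 : S * x.transpose * (x * S) = S * S := by
        rw [Matrix.mul_assoc, ← Matrix.mul_assoc x.transpose, hx', Matrix.one_mul]
      simp only [Matrix.transpose_sub, Matrix.transpose_smul, Matrix.transpose_mul, hSt,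
        Matrix.sub_mul, Matrix.mul_sub, Matrix.smul_mul, Matrix.mul_smul, h3, smul_smul]
      rw [← Matrix.mul_assoc S]
      module
    rw [this]
    simp only [Matrix.trace_add, Matrix.trace_sub, Matrix.trace_smul, smul_eq_mul, e1, e2]
    ring
  have := sq_nonneg ‖S‖
  exact (sq_le_sq₀ (norm_nonneg _) (norm_nonneg _)).1 (by linarith)

lemma tproj_sub {d r : ℕ} (x v w : Matrix (Fin d) (Fin r) ℝ) :
    Tproj x (v - w) = Tproj x v - Tproj x w := by
  simp only [Tproj, Matrix.transpose_sub, Matrix.sub_mul, Matrix.mul_sub, Matrix.mul_add]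
  module

lemma tproj_add {d r : ℕ} (x v w : Matrix (Fin d) (Fin r) ℝ) :
    Tproj x (v + w) = Tproj x v + Tproj x w := by
  simp only [Tproj, Matrix.transpose_add, Matrix.add_mul, Matrix.mul_add]
  module

lemma tproj_smul {d r : ℕ} (x v : Matrix (Fin d) (Fin r) ℝ) (c : ℝ) :
    Tproj x (c • v) = c • Tproj x v := by
  simp only [Tproj, Matrix.transpose_smul, Matrix.smul_mul, Matrix.mul_smul, Matrix.mul_add]
  module

lemma tproj_sum {d r n : ℕ} (x : Matrix (Fin d) (Fin r) ℝ)
    (v : Fin n → Matrix (Fin d) (Fin r) ℝ) :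
    Tproj x (∑ i, v i) = ∑ i, Tproj x (v i) :=
  map_sum (AddMonoidHom.mk' (Tproj x) (tproj_add x)) v Finset.univ

lemma tproj_diff {d r : ℕ} {x y : Matrix (Fin d) (Fin r) ℝ} (hx : x ∈ Stiefel d r)
    (hy : y ∈ Stiefel d r) (g : Matrix (Fin d) (Fin r) ℝ) :
    ‖Tproj x g - Tproj y g‖ ≤ 2 * ‖g‖ * ‖x - y‖ := by
  have e : Tproj x g - Tproj y g = (-(1 / 2) : ℝ) •
      ((x - y) * (x.transpose * g + g.transpose * x) +
        y * ((x - y).transpose * g + g.transpose * (x - y))) := by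
    simp only [Tproj, Matrix.transpose_sub, Matrix.sub_mul, Matrix.mul_sub, Matrix.mul_add]
    module
  have h1 : ‖x.transpose * g + g.transpose * x‖ ≤ 2 * ‖g‖ := by
    have a := stiefel_transpose_mul_norm hx g
    have b : ‖g.transpose * x‖ = ‖x.transpose * g‖ := by
      rw [← Matrix.frobenius_norm_transpose, Matrix.transpose_mul, Matrix.transpose_transpose]
    have c := norm_add_le (x.transpose * g) (g.transpose * x)
    linarith
  have h2 : ‖(x - y).transpose * g + g.transpose * (x - y)‖ ≤ 2 * (‖x - y‖ * ‖g‖) := by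
    have a := Matrix.frobenius_norm_mul (x - y).transpose g
    have b := Matrix.frobenius_norm_mul g.transpose (x - y)
    rw [Matrix.frobenius_norm_transpose] at a b
    have c := norm_add_le ((x - y).transpose * g) (g.transpose * (x - y))
    linarith
  have h3 := Matrix.frobenius_norm_mul (x - y) (x.transpose * g + g.transpose * x)
  have h4 := mul_le_mul_of_nonneg_left h1 (norm_nonneg (x - y))
  have h5 := stiefel_mul_norm hy ((x - y).transpose * g + g.transpose * (x - y))
  have h6 := norm_add_le ((x - y) * (x.transpose * g + g.transpose * x))
    (y * ((x - y).transpose * g + g.transpose * (x - y)))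
  rw [e, norm_smul]
  have : ‖(-(1 / 2) : ℝ)‖ = 1 / 2 := by norm_num
  rw [this]
  linarith

/-- bound on the Riemannian gradient of the global function at `x̄` via the
average of local Riemannian gradients plus the consensus error. Here `f = (1/n)∑ᵢ fᵢ`, so that
`∇f(x̄) = (1/n)∑ᵢ ∇fᵢ(x̄)` and `grad f(x̄) = P_{T_x̄}((1/n)∑ᵢ ∇fᵢ(x̄))`. -/
theorem stmt13 {d r n : ℕ} (L Lf : ℝ)
    (f : Fin n → Matrix (Fin d) (Fin r) ℝ → ℝ)
    (nabla : Fin n → Matrix (Fin d) (Fin r) ℝ → Matrix (Fin d) (Fin r) ℝ)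
    (hdiff : ∀ i, Differentiable ℝ (f i))
    (hgrad : ∀ i x v, fderiv ℝ (f i) x v = Matrix.trace ((nabla i x).transpose * v))
    (hLip : ∀ i x y, ‖nabla i x - nabla i y‖ ≤ L * ‖x - y‖)
    (hbd : ∀ i, ∀ x ∈ Stiefel d r, ‖nabla i x‖ ≤ Lf)
    (x : Fin n → Matrix (Fin d) (Fin r) ℝ) (hx : ∀ i, x i ∈ Stiefel d r)
    (xbar : Matrix (Fin d) (Fin r) ℝ) (hxbar : xbar ∈ Stiefel d r) :
    ‖Tproj xbar ((n : ℝ)⁻¹ • ∑ i, nabla i xbar)‖ ^ 2 ≤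
      2 * ‖(n : ℝ)⁻¹ • ∑ i, Tproj (x i) (nabla i (x i))‖ ^ 2 +
        2 * (L + 2 * Lf) ^ 2 / n * ∑ i, ‖xbar - x i‖ ^ 2 := by
  have hD : ∀ i, ‖Tproj xbar (nabla i xbar) - Tproj (x i) (nabla i (x i))‖ ^ 2 ≤
      (L + 2 * Lf) ^ 2 * ‖xbar - x i‖ ^ 2 := by
    intro i
    have a := tproj_norm_le hxbar (nabla i xbar - nabla i (x i))
    have b := hLip i xbar (x i)
    have c := tproj_diff hxbar (hx i) (nabla i (x i))
    have e : 2 * ‖nabla i (x i)‖ * ‖xbar - x i‖ ≤ 2 * Lf * ‖xbar - x i‖ := by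
      have := hbd i (x i) (hx i)
      gcongr
    have t := norm_add_le (Tproj xbar (nabla i xbar - nabla i (x i)))
      (Tproj xbar (nabla i (x i)) - Tproj (x i) (nabla i (x i)))
    rw [tproj_sub, sub_add_sub_cancel] at t
    rw [tproj_sub] at a
    rw [← mul_pow]
    apply pow_le_pow_left₀ (norm_nonneg _)
    linarith
  set D : Fin n → Matrix (Fin d) (Fin r) ℝ :=
    fun i => Tproj xbar (nabla i xbar) - Tproj (x i) (nabla i (x i)) with hDdef
  have hsum : Tproj xbar ((n : ℝ)⁻¹ • ∑ i, nabla i xbar) =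
      (n : ℝ)⁻¹ • ∑ i, Tproj (x i) (nabla i (x i)) + (n : ℝ)⁻¹ • ∑ i, D i := by
    rw [tproj_smul, tproj_sum, ← smul_add, ← Finset.sum_add_distrib]
    simp [hDdef]
  rw [hsum]
  set M := (n : ℝ)⁻¹ • ∑ i, Tproj (x i) (nabla i (x i))
  have hE : ‖(n : ℝ)⁻¹ • ∑ i, D i‖ ^ 2 ≤
      (L + 2 * Lf) ^ 2 / n * ∑ i, ‖xbar - x i‖ ^ 2 := by
    have h1 : ‖∑ i, D i‖ ^ 2 ≤ n * ∑ i, ‖D i‖ ^ 2 := by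
      have h := sq_sum_le_card_mul_sum_sq (s := Finset.univ) (f := fun i => ‖D i‖)
      rw [Finset.card_univ, Fintype.card_fin] at h
      exact (pow_le_pow_left₀ (norm_nonneg _) (norm_sum_le _ _) 2).trans h
    have h2 : ∑ i, ‖D i‖ ^ 2 ≤ (L + 2 * Lf) ^ 2 * ∑ i, ‖xbar - x i‖ ^ 2 := by
      rw [Finset.mul_sum]
      exact Finset.sum_le_sum fun i _ => hD i
    rcases Nat.eq_zero_or_pos n with hn | hn
    · subst hn
      simp
    have hn' : (0 : ℝ) < n := by exact_mod_cast hn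
    rw [norm_smul, mul_pow, norm_inv, Real.norm_natCast]
    calc (n : ℝ)⁻¹ ^ 2 * ‖∑ i, D i‖ ^ 2
        ≤ (n : ℝ)⁻¹ ^ 2 * (n * ((L + 2 * Lf) ^ 2 * ∑ i, ‖xbar - x i‖ ^ 2)) := by
          gcongr
          exact h1.trans (by gcongr)
      _ = _ := by field_simp
  have hN : ‖M + (n : ℝ)⁻¹ • ∑ i, D i‖ ^ 2 ≤ 2 * ‖M‖ ^ 2 + 2 * ‖(n : ℝ)⁻¹ • ∑ i, D i‖ ^ 2 := by
    have h := pow_le_pow_left₀ (norm_nonneg _) (norm_add_le M ((n : ℝ)⁻¹ • ∑ i, D i)) 2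
    nlinarith [sq_nonneg (‖M‖ - ‖(n : ℝ)⁻¹ • ∑ i, D i‖)]
  have hf : 2 * (L + 2 * Lf) ^ 2 / n * ∑ i, ‖xbar - x i‖ ^ 2 =
      2 * ((L + 2 * Lf) ^ 2 / n * ∑ i, ‖xbar - x i‖ ^ 2) := by ring
  rw [hf]
  linarith
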